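/- Let M = (S, A, P, R, H, μ) be a finite MDP with H ≥ 2·ln(8 · (|S|+1)^{4(|S|+1)}) and let ε ∈ (0,1]. For each (s, a) ∈ S × A, let m_ε(s, a) be the largest integer such that there exists a (possibly non-stationary) deterministic policy π_{s,a} with Q^{π_{s,a}}_ε(s, a) ≥ m_ε(s, a). Then for each (s, a) ∈ S × A, Q^{st}_{ε·(|S|+1)^{−12(|S|+1)}/1024}(s, a) ≥ (1/(4096 · |S|^{12|S|})) · ε · m_ε(s, a), where Q^{st}_δ(s, a) is the δ-quantile of the total number of times (s, a) is visited across the combined collection of switched-policy trajectories described in the context. -/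

import Mathlib

open Finset

/-- Extend a trajectory `(s_0, …, s_H)` to a function `ℕ → S` (constant after time `H`). -/
def extT {S : Type} (H : ℕ) (T : Fin (H + 1) → S) : ℕ → S :=
  fun n => T ⟨min n H, Nat.lt_succ_of_le (Nat.min_le_right n H)⟩

/-- Probability of the trajectory with state sequence `f` under the (possibly non-stationary)
deterministic policy `π`: `p(T, M, π) = μ(s_0) · ∏_{h<H} P(s_{h+1} ∣ s_h, π_h(s_h))`. -/
noncomputable def trajP {S A : Type} (μ : S → ℝ) (P : S → A → S → ℝ)
    (π : ℕ → S → A) (H : ℕ) (f : ℕ → S) : ℝ :=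
  μ (f 0) * ∏ h ∈ Finset.range H, P (f h) (π h (f h)) (f (h + 1))

/-- Number of times the state-action pair `z` is visited during the first `K` steps of the
trajectory with state sequence `f`, when actions are chosen by the policy `π`. -/
def nVisits {S A : Type} [DecidableEq S] [DecidableEq A] (π : ℕ → S → A) (K : ℕ)
    (z : S × A) (f : ℕ → S) : ℕ :=
  ∑ h ∈ Finset.range K, if (f h, π h (f h)) = z then 1 else 0

/-- The `d`-quantile `Q_d(X) = sup {x ∣ Pr[X ≥ x] ≥ d}` of the random variable `X` of the random
trajectory induced by executing the policy `π` in the `H`-horizon MDP `(μ, P)`. -/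
noncomputable def quantNS {S A : Type} [Fintype S] (μ : S → ℝ) (P : S → A → S → ℝ)
    (π : ℕ → S → A) (H : ℕ) (X : (ℕ → S) → ℝ) (d : ℝ) : ℝ :=
  sSup {x : ℝ | d ≤ ∑ T : Fin (H + 1) → S,
    if x ≤ X (extT H T) then trajP μ P π H (extT H T) else 0}

/-- Whether the state-action pair `z` has been visited strictly before time `n` in the switched
execution determined by the pair of stationary policies `(π₁, π₂)` along states `f`: one follows
`π₁` until `z` is visited for the first time, and `π₂` afterwards. -/
def swVisited {S A : Type} [DecidableEq S] [DecidableEq A] (z : S × A) (π₁ π₂ : S → A)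
    (f : ℕ → S) : ℕ → Bool
  | 0 => false
  | n + 1 =>
    swVisited z π₁ π₂ f n ||
      decide ((f n, (if swVisited z π₁ π₂ f n then π₂ else π₁) (f n)) = z)

/-- The action taken at time `n` in the switched execution. -/
def swAct {S A : Type} [DecidableEq S] [DecidableEq A] (z : S × A) (π₁ π₂ : S → A)
    (f : ℕ → S) (n : ℕ) : A :=
  (if swVisited z π₁ π₂ f n then π₂ else π₁) (f n)

/-- Probability of the trajectory with state sequence `f` under the switched execution
determined by `(z, π₁, π₂)`. -/
noncomputable def swProb {S A : Type} [DecidableEq S] [DecidableEq A] (μ : S → ℝ)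
    (P : S → A → S → ℝ) (z : S × A) (π₁ π₂ : S → A) (H : ℕ) (f : ℕ → S) : ℝ :=
  μ (f 0) * ∏ h ∈ Finset.range H, P (f h) (swAct z π₁ π₂ f h) (f (h + 1))

/-- Number of visits to `target` during the first `K` steps of the switched execution. -/
def swVisits {S A : Type} [DecidableEq S] [DecidableEq A] (z : S × A) (π₁ π₂ : S → A)
    (K : ℕ) (target : S × A) (f : ℕ → S) : ℕ :=
  ∑ h ∈ Finset.range K, if (f h, swAct z π₁ π₂ f h) = target then 1 else 0

/-- Joint probability of the independently drawn collection of switched-policy trajectories,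
one for each `((s', a'), π₁, π₂) ∈ (S × A) × Π_st × Π_st`. -/
noncomputable def jointProb {S A : Type} [Fintype S] [Fintype A] [DecidableEq S] [DecidableEq A]
    (μ : S → ℝ) (P : S → A → S → ℝ) (H : ℕ)
    (ω : (S × A) × (S → A) × (S → A) → (Fin (H + 1) → S)) : ℝ :=
  ∏ idx : (S × A) × (S → A) × (S → A),
    swProb μ P idx.1 idx.2.1 idx.2.2 H (extT H (ω idx))

/-- Total number of visits to `target` across the combined collection of switched-policy
trajectories. -/
def totalVisits {S A : Type} [Fintype S] [Fintype A] [DecidableEq S] [DecidableEq A]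
    (H : ℕ) (target : S × A) (ω : (S × A) × (S → A) × (S → A) → (Fin (H + 1) → S)) : ℕ :=
  ∑ idx : (S × A) × (S → A) × (S → A),
    swVisits idx.1 idx.2.1 idx.2.2 H target (extT H (ω idx))

/-- `Q^st_d(target)`: the `d`-quantile of the total number of visits to `target` across the
independently drawn collection of switched-policy trajectories. -/
noncomputable def Qst {S A : Type} [Fintype S] [Fintype A] [DecidableEq S] [DecidableEq A]
    (μ : S → ℝ) (P : S → A → S → ℝ) (H : ℕ) (target : S × A) (d : ℝ) : ℝ :=
  sSup {x : ℝ | d ≤ ∑ ω : (S × A) × (S → A) × (S → A) → (Fin (H + 1) → S),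
    if x ≤ (totalVisits H target ω : ℝ) then jointProb μ P H ω else 0}


section Kernel

variable {S : Type} [Fintype S]

lemma nonneg_of_superharmonic (M : S → S → ℝ) (hM0 : ∀ x y, 0 ≤ M x y)
    (hM1 : ∀ x, ∑ y, M x y ≤ 1) (c : S → ℝ) (hc : ∀ x, 1 < c x) (V : S → ℝ)
    (h : ∀ x, 0 ≤ V x ∨ ∑ y, M x y * V y ≤ c x * V x) (x : S) : 0 ≤ V x := by
  obtain ⟨x₀, -, hx₀⟩ := Finset.exists_min_image univ V ⟨x, mem_univ x⟩
  refine le_trans ?_ (hx₀ x (mem_univ x))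
  by_contra! hneg
  rcases h x₀ with h | h
  · linarith
  · have h1 : ∑ y, M x₀ y * V x₀ ≤ ∑ y, M x₀ y * V y :=
      sum_le_sum fun y _ => mul_le_mul_of_nonneg_left (hx₀ y (mem_univ y)) (hM0 _ _)
    rw [← sum_mul] at h1
    nlinarith [hM1 x₀, hc x₀]

lemma exists_resolvent (M : S → S → ℝ) (hM0 : ∀ x y, 0 ≤ M x y)
    (hM1 : ∀ x, ∑ y, M x y ≤ 1) (c : S → ℝ) (hc : ∀ x, 1 < c x) (f : S → ℝ) :
    ∃ V : S → ℝ, ∀ x, c x * V x = ∑ y, M x y * V y + f x := by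
  let L : (S → ℝ) →ₗ[ℝ] (S → ℝ) :=
    { toFun := fun V x => c x * V x - ∑ y, M x y * V y
      map_add' := fun V W => by
        ext x
        simp only [Pi.add_apply, mul_add, sum_add_distrib]
        ring
      map_smul' := fun a V => by
        ext x
        simp only [Pi.smul_apply, smul_eq_mul, RingHom.id_apply, mul_sub, mul_sum]
        congr 1
        · ring
        · exact sum_congr rfl fun y _ => by ring }
  have hL : ∀ V x, L V x = c x * V x - ∑ y, M x y * V y := fun _ _ => rfl
  have hinj : Function.Injective L := by
    rw [injective_iff_map_eq_zero]
    intro V hV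
    have hV' : ∀ x, c x * V x = ∑ y, M x y * V y := fun x => by
      have := congrFun hV x
      rw [hL] at this
      simpa [sub_eq_zero] using this
    ext x
    refine le_antisymm ?_ ?_
    · have := nonneg_of_superharmonic M hM0 hM1 c hc (fun x => - V x)
        (fun x => Or.inr (by simp [hV' x])) x
      simpa using this
    · exact nonneg_of_superharmonic M hM0 hM1 c hc V (fun x => Or.inr (hV' x).ge) x
  obtain ⟨V, hV⟩ := LinearMap.injective_iff_surjective.mp hinj f
  refine ⟨V, fun x => ?_⟩
  have := congrFun hV x
  rw [hL] at this
  linarith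

lemma resolvent_nonneg (M : S → S → ℝ) (hM0 : ∀ x y, 0 ≤ M x y)
    (hM1 : ∀ x, ∑ y, M x y ≤ 1) (c : S → ℝ) (hc : ∀ x, 1 < c x) (f : S → ℝ)
    (hf : ∀ x, 0 ≤ f x) (V : S → ℝ) (hV : ∀ x, c x * V x = ∑ y, M x y * V y + f x) (x : S) :
    0 ≤ V x :=
  nonneg_of_superharmonic M hM0 hM1 c hc V (fun x => Or.inr (by linarith [hV x, hf x])) x

lemma resolvent_anti (M : S → S → ℝ) (hM0 : ∀ x y, 0 ≤ M x y)
    (hM1 : ∀ x, ∑ y, M x y ≤ 1) (c c' : S → ℝ) (hc : ∀ x, 1 < c x) (hcc : ∀ x, c x ≤ c' x)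
    (f : S → ℝ) (hf : ∀ x, 0 ≤ f x) (V V' : S → ℝ)
    (hV : ∀ x, c x * V x = ∑ y, M x y * V y + f x)
    (hV' : ∀ x, c' x * V' x = ∑ y, M x y * V' y + f x) (x : S) : V' x ≤ V x := by
  have hV0 := resolvent_nonneg M hM0 hM1 c' (fun x => (hc x).trans_le (hcc x)) f hf V' hV'
  have := nonneg_of_superharmonic M hM0 hM1 c hc (fun x => V x - V' x) (fun x => Or.inr (by
    simp only [mul_sub, sum_sub_distrib]
    nlinarith [hV x, hV' x, hcc x, hV0 x])) x
  linarith

/-- Multiplying the killing rate at a single state by `r ≥ 1` decreases the Green function by a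
factor of at most `r`. -/
lemma resolvent_single_perturb (M : S → S → ℝ) (hM0 : ∀ x y, 0 ≤ M x y)
    (hM1 : ∀ x, ∑ y, M x y ≤ 1) (l l' : S → ℝ) (hl : ∀ x, 0 < l x) (r : ℝ) (hr : 1 ≤ r)
    (u : S) (hu : l' u = r * l u) (hne : ∀ x, x ≠ u → l' x = l x)
    (f : S → ℝ) (hf : ∀ x, 0 ≤ f x) (V V' : S → ℝ)
    (hV : ∀ x, (1 + l x) * V x = ∑ y, M x y * V y + f x)
    (hV' : ∀ x, (1 + l' x) * V' x = ∑ y, M x y * V' y + f x) (x : S) : V x ≤ r * V' x := by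
  have hc : ∀ x, 1 < 1 + l x := fun x => by linarith [hl x]
  have hcc : ∀ x, 1 + l x ≤ 1 + l' x := fun x => by
    by_cases h : x = u
    · subst h; nlinarith [hl x]
    · rw [hne x h]
  have hanti := resolvent_anti M hM0 hM1 _ _ hc hcc f hf V V' hV hV'
  have hD : ∀ x, V x - V' x ≤ V u - V' u := fun x => by
    have := nonneg_of_superharmonic M hM0 hM1 _ hc
      (fun x => (V u - V' u) - (V x - V' x)) (fun x => by
        by_cases h : x = u
        · left; simp [h]
        · right
          have h2 := hV' x
          rw [hne x h] at h2
          simp only [mul_sub, sum_sub_distrib, ← sum_mul]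
          nlinarith [hV x, hM1 x, hl x, hanti u]) x
    linarith
  have hsum : ∑ y, M u y * V y - ∑ y, M u y * V' y ≤ V u - V' u := by
    rw [← sum_sub_distrib]
    calc ∑ y, (M u y * V y - M u y * V' y) ≤ ∑ y, M u y * (V u - V' u) :=
          sum_le_sum fun y _ => by
            rw [← mul_sub]; exact mul_le_mul_of_nonneg_left (hD y) (hM0 _ _)
      _ ≤ V u - V' u := by
          rw [← sum_mul]; nlinarith [hM1 u, hanti u]
  have hVu : V u ≤ r * V' u := by
    have h1 := hV u
    have h2 := hV' u
    rw [hu] at h2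
    have : l u * V u ≤ l u * (r * V' u) := by nlinarith
    exact le_of_mul_le_mul_left this (hl u)
  have := nonneg_of_superharmonic M hM0 hM1 _ hc (fun x => r * V' x - V x) (fun x => by
    by_cases h : x = u
    · left; rw [h]; linarith
    · right
      have h2 := hV' x
      rw [hne x h] at h2
      have h3 : ∑ y, M x y * (r * V' y - V y) = r * ∑ y, M x y * V' y - ∑ y, M x y * V y := by
        rw [mul_sum, ← sum_sub_distrib]
        exact sum_congr rfl fun y _ => by ring
      rw [h3]
      nlinarith [hV x, hf x]) x
  linarith

/-- Multiplying all killing rates by `r ≥ 1` decreases the Green function by a factor of at most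
`r ^ |S|`. -/
lemma resolvent_perturb (M : S → S → ℝ) (hM0 : ∀ x y, 0 ≤ M x y)
    (hM1 : ∀ x, ∑ y, M x y ≤ 1) (l : ℝ) (hl : 0 < l) (r : ℝ) (hr : 1 ≤ r)
    (f : S → ℝ) (hf : ∀ x, 0 ≤ f x) (V V' : S → ℝ)
    (hV : ∀ x, (1 + l) * V x = ∑ y, M x y * V y + f x)
    (hV' : ∀ x, (1 + r * l) * V' x = ∑ y, M x y * V' y + f x) (x : S) :
    V x ≤ r ^ Fintype.card S * V' x := by
  classical
  have hrate : ∀ (F : Finset S) x, 0 < if x ∈ F then r * l else l := fun F x => by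
    split_ifs <;> positivity
  have key : ∀ (F : Finset S) (U : S → ℝ),
      (∀ x, (1 + if x ∈ F then r * l else l) * U x = ∑ y, M x y * U y + f x) →
      ∀ x, V x ≤ r ^ F.card * U x := by
    intro F
    induction F using Finset.induction_on with
    | empty =>
      intro U hU x
      have := resolvent_anti M hM0 hM1 (fun _ => 1 + l) (fun _ => 1 + l) (fun _ => by linarith)
        (fun _ => le_rfl) f hf U V (by simpa using hU) hV x
      simpa using this
    | insert u F hu ih =>
      intro U hU x
      obtain ⟨U₀, hU₀⟩ := exists_resolvent M hM0 hM1 (fun x => 1 + if x ∈ F then r * l else l)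
        (fun x => by linarith [hrate F x]) f
      have h1 := ih U₀ hU₀ x
      have h2 := resolvent_single_perturb M hM0 hM1 (fun x => if x ∈ F then r * l else l)
        (fun x => if x ∈ insert u F then r * l else l) (hrate F) r hr u (by simp [hu])
        (fun x hx => by simp [hx]) f hf U₀ U hU₀ hU x
      rw [card_insert_of_notMem hu, pow_succ, mul_assoc]
      exact h1.trans (mul_le_mul_of_nonneg_left h2 (by positivity))
  simpa using key univ V' (by simpa using hV') x

/-- The Green function `∑ t < T, M ^ t f` up to time `T`. -/
def partialGreen (M : S → S → ℝ) (f : S → ℝ) : ℕ → S → ℝ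
  | 0 => fun _ => 0
  | T + 1 => fun x => f x + ∑ y, M x y * partialGreen M f T y

lemma partialGreen_nonneg (M : S → S → ℝ) (hM0 : ∀ x y, 0 ≤ M x y) (f : S → ℝ)
    (hf : ∀ x, 0 ≤ f x) (T : ℕ) (x : S) : 0 ≤ partialGreen M f T x := by
  induction T generalizing x with
  | zero => simp [partialGreen]
  | succ T ih =>
    exact add_nonneg (hf x) (sum_nonneg fun y _ => mul_nonneg (hM0 _ _) (ih y))

lemma partialGreen_mono (M : S → S → ℝ) (hM0 : ∀ x y, 0 ≤ M x y) (f : S → ℝ)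
    (hf : ∀ x, 0 ≤ f x) (x : S) : Monotone fun T => partialGreen M f T x := by
  refine monotone_nat_of_le_succ fun T => ?_
  induction T generalizing x with
  | zero => exact partialGreen_nonneg M hM0 f hf 1 x
  | succ T ih =>
    exact add_le_add_right (sum_le_sum fun y _ => mul_le_mul_of_nonneg_left (ih y) (hM0 _ _)) _

lemma partialGreen_ge (M : S → S → ℝ) (hM0 : ∀ x y, 0 ≤ M x y) (c c' : ℝ)
    (hc : 0 < c) (hc' : 1 < c') (f : S → ℝ) (hf : ∀ x, 0 ≤ f x) (V V' : S → ℝ)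
    (hV : ∀ x, c * V x = ∑ y, M x y * V y + f x)
    (hV' : ∀ x, c' * V' x = ∑ y, M x y * V' y + f x) (hle : ∀ x, V' x ≤ V x) (T : ℕ) (x : S) :
    V' x - (c / c') ^ T * V x ≤ partialGreen M f T x := by
  induction T generalizing x with
  | zero => simpa [partialGreen] using hle x
  | succ T ih =>
    set X := V' x - (c / c') ^ (T + 1) * V x with hX
    have hu := partialGreen_nonneg M hM0 f hf (T + 1) x
    have h1 : ∑ y, M x y * (V' y - (c / c') ^ T * V y) ≤ ∑ y, M x y * partialGreen M f T y :=
      sum_le_sum fun y _ => mul_le_mul_of_nonneg_left (ih y) (hM0 _ _)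
    have h2 : ∑ y, M x y * (V' y - (c / c') ^ T * V y)
        = ∑ y, M x y * V' y - (c / c') ^ T * ∑ y, M x y * V y := by
      rw [mul_sum, ← sum_sub_distrib]
      exact sum_congr rfl fun y _ => by ring
    have h3 : c' * X = c' * V' x - (c / c') ^ T * (c * V x) := by
      rw [hX, pow_succ]; field_simp
    have h4 : 0 ≤ (c / c') ^ T * f x := mul_nonneg (by positivity) (hf x)
    have h5 : c' * X ≤ partialGreen M f (T + 1) x := by
      rw [h3, hV, hV']
      simp only [partialGreen]
      nlinarith
    by_contra! hlt
    nlinarith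

lemma half_resolvent_le_partialGreen (M : S → S → ℝ) (hM0 : ∀ x y, 0 ≤ M x y)
    (hM1 : ∀ x, ∑ y, M x y ≤ 1) (l : ℝ) (hl : 0 < l) (r : ℝ) (hr : 1 ≤ r)
    (f : S → ℝ) (hf : ∀ x, 0 ≤ f x) (V : S → ℝ)
    (hV : ∀ x, (1 + l) * V x = ∑ y, M x y * V y + f x) (T : ℕ)
    (hT : 2 * r ^ Fintype.card S * (1 + l) ^ T ≤ (1 + r * l) ^ T) (x : S) :
    V x ≤ 2 * r ^ Fintype.card S * partialGreen M f T x := by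
  have hrl : l ≤ r * l := by nlinarith
  obtain ⟨V', hV'⟩ := exists_resolvent M hM0 hM1 (fun _ => 1 + r * l) (fun _ => by linarith) f
  have h0 := resolvent_nonneg M hM0 hM1 (fun _ => 1 + l) (fun _ => by linarith) f hf V hV x
  have h1 := resolvent_perturb M hM0 hM1 l hl r hr f hf V V' hV hV' x
  have h2 := partialGreen_ge M hM0 (1 + l) (1 + r * l) (by linarith) (by linarith) f hf V V' hV hV'
    (resolvent_anti M hM0 hM1 _ _ (fun _ => by linarith) (fun _ => by linarith) f hf V V' hV hV')
    T x
  have hp : 0 < r ^ Fintype.card S := by positivity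
  have h3 : 2 * r ^ Fintype.card S * ((1 + l) / (1 + r * l)) ^ T ≤ 1 := by
    rw [div_pow, ← mul_div_assoc, div_le_one (pow_pos (by linarith) _)]
    exact hT
  have h4 := mul_le_mul_of_nonneg_right h3 h0
  have h5 := mul_le_mul_of_nonneg_left h2 (by positivity : 0 ≤ 2 * r ^ Fintype.card S)
  nlinarith

variable [DecidableEq S]

/-- The probability that the Markov chain with kernel `K` started at `x` visits `s` at least `k`
times during its first `t` steps, as a function of `t`, `k` and `x`. -/
def visitTail (K : S → S → ℝ) (s : S) : ℕ → ℕ → S → ℝ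
  | _, 0, _ => 1
  | 0, _ + 1, _ => 0
  | t + 1, k + 1, x => ∑ y, K x y * visitTail K s t (if x = s then k else k + 1) y

lemma visitTail_nonneg (K : S → S → ℝ) (hK0 : ∀ x y, 0 ≤ K x y) (s : S) (t k : ℕ) (x : S) :
    0 ≤ visitTail K s t k x := by
  induction t generalizing k x with
  | zero => cases k <;> simp [visitTail]
  | succ t ih =>
    cases k with
    | zero => simp [visitTail]
    | succ k => exact sum_nonneg fun y _ => mul_nonneg (hK0 _ _) (ih _ _)

lemma visitTail_mono (K : S → S → ℝ) (hK0 : ∀ x y, 0 ≤ K x y) (s : S) (k : ℕ) (x : S) :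
    Monotone fun t => visitTail K s t k x := by
  refine monotone_nat_of_le_succ fun t => ?_
  induction t generalizing k x with
  | zero =>
    cases k with
    | zero => simp [visitTail]
    | succ k => simpa [visitTail] using visitTail_nonneg K hK0 s 1 (k + 1) x
  | succ t ih =>
    cases k with
    | zero => simp [visitTail]
    | succ k => exact sum_le_sum fun y _ => mul_le_mul_of_nonneg_left (ih _ y) (hK0 _ _)

lemma partialGreen_le_diag (K : S → S → ℝ) (hK0 : ∀ x y, 0 ≤ K x y) (hK1 : ∀ x, ∑ y, K x y = 1)
    (s : S) (T t : ℕ) (ht : t ≤ T) (x : S) :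
    partialGreen K (fun x => if x = s then 1 else 0) t x
      ≤ partialGreen K (fun x => if x = s then 1 else 0) T s := by
  have hf : ∀ x, (0 : ℝ) ≤ if x = s then 1 else 0 := fun x => by split_ifs <;> simp
  induction t generalizing x with
  | zero => exact partialGreen_nonneg K hK0 _ hf T s
  | succ t ih =>
    by_cases hx : x = s
    · rw [hx]; exact partialGreen_mono K hK0 _ hf s ht
    · simp only [partialGreen, hx, if_false, zero_add]
      calc _ ≤ ∑ y, K x y * partialGreen K (fun x => if x = s then 1 else 0) T s :=
            sum_le_sum fun y _ => mul_le_mul_of_nonneg_left (ih (by omega) y) (hK0 _ _)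
        _ = _ := by rw [← sum_mul, hK1, one_mul]

/-- The expected number of visits exceeds `k` by at most the probability of `k` visits times the
expected number of visits from `s`. -/
lemma partialGreen_le_add_visitTail (K : S → S → ℝ) (hK0 : ∀ x y, 0 ≤ K x y)
    (hK1 : ∀ x, ∑ y, K x y = 1) (s : S) (T t : ℕ) (ht : t ≤ T) (k : ℕ) (x : S) :
    partialGreen K (fun x => if x = s then 1 else 0) t x
      ≤ k + visitTail K s t k x * partialGreen K (fun x => if x = s then 1 else 0) T s := by
  induction t generalizing k x with
  | zero =>
    have hf : ∀ x, (0 : ℝ) ≤ if x = s then 1 else 0 := fun x => by split_ifs <;> simp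
    exact add_nonneg k.cast_nonneg
      (mul_nonneg (visitTail_nonneg K hK0 _ _ _ _) (partialGreen_nonneg K hK0 _ hf _ _))
  | succ t ih =>
    cases k with
    | zero => simpa [visitTail] using partialGreen_le_diag K hK0 hK1 s T (t + 1) ht x
    | succ k =>
      set R := partialGreen K (fun x => if x = s then 1 else 0) T s
      have h : ∀ j : ℕ, ∑ y, K x y * partialGreen K (fun x => if x = s then 1 else 0) t y
          ≤ j + (∑ y, K x y * visitTail K s t j y) * R := fun j => by
        calc _ ≤ ∑ y, K x y * (j + visitTail K s t j y * R) :=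
              sum_le_sum fun y _ => mul_le_mul_of_nonneg_left (ih (by omega) j y) (hK0 _ _)
          _ = _ := by
              simp only [mul_add, sum_add_distrib, ← sum_mul, hK1, one_mul, ← mul_assoc]
      by_cases hx : x = s
      · have := h k
        simp only [partialGreen, visitTail, hx, if_true] at this ⊢
        push_cast
        linarith
      · have := h (k + 1)
        simp only [partialGreen, visitTail, hx, if_false, zero_add] at this ⊢
        exact this

lemma partialGreen_mul_visitTail_le (K : S → S → ℝ) (hK0 : ∀ x y, 0 ≤ K x y) (s : S)
    (hK1 : ∀ x, ∑ y, K x y = 1) (T t k : ℕ) (x : S) :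
    partialGreen (fun x y => if x = s then 0 else K x y) (fun x => if x = s then 1 else 0) (t + 1) x
      * visitTail K s T k s ≤ visitTail K s (t + T) k x := by
  have hT0 := visitTail_nonneg K hK0 s T k s
  induction t generalizing x with
  | zero =>
    by_cases hx : x = s
    · simp [partialGreen, hx]
    · simpa [partialGreen, hx] using visitTail_nonneg K hK0 s T k x
  | succ t ih =>
    by_cases hx : x = s
    · subst hx
      rw [partialGreen]
      simpa using visitTail_mono K hK0 x k x (by omega : T ≤ t + 1 + T)
    · have hp : visitTail K s (t + 1 + T) k x = ∑ y, K x y * visitTail K s (t + T) k y := by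
        rw [show t + 1 + T = (t + T) + 1 by omega]
        cases k with
        | zero => simp [visitTail, hK1]
        | succ k => simp [visitTail, hx]
      rw [hp, partialGreen]
      simp only [hx, if_false, zero_add, sum_mul, mul_assoc]
      exact sum_le_sum fun y _ => mul_le_mul_of_nonneg_left (ih y) (hK0 _ _)

end Kernel

section Trajectory

variable {S A : Type}

/-- The state sequence starting at `x` and continuing with `f`. -/
def consSeq (x : S) (f : ℕ → S) : ℕ → S
  | 0 => x
  | n + 1 => f n

lemma extT_cons (H : ℕ) (x : S) (T : Fin (H + 1) → S) :
    extT (H + 1) (Fin.cons x T : Fin (H + 2) → S) = consSeq x (extT H T) := by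
  funext n
  cases n with
  | zero => simp [extT, consSeq]
  | succ n =>
    have : (⟨min (n + 1) (H + 1), by omega⟩ : Fin (H + 2)) = Fin.succ ⟨min n H, by omega⟩ := by
      ext; simp
    simp only [extT, consSeq, this, Fin.cons_succ]

lemma nVisits_consSeq [DecidableEq S] [DecidableEq A] (π : ℕ → S → A) (H : ℕ) (z : S × A) (x : S) (f : ℕ → S) :
    nVisits π (H + 1) z (consSeq x f)
      = (if (x, π 0 x) = z then 1 else 0) + nVisits (fun n => π (n + 1)) H z f := by
  simp only [nVisits, sum_range_succ']
  rw [add_comm]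
  rfl

variable [Fintype S]

/-- The expectation of `X` over the `H`-step trajectory started at `x` under the policy `π`. -/
def trajEx (P : S → A → S → ℝ) : ℕ → (ℕ → S → A) → S → ((ℕ → S) → ℝ) → ℝ
  | 0, _, x, X => X fun _ => x
  | H + 1, π, x, X =>
    ∑ y, P x (π 0 x) y * trajEx P H (fun n => π (n + 1)) y fun f => X (consSeq x f)

lemma sum_trajP_mul (P : S → A → S → ℝ) (H : ℕ) (μ : S → ℝ) (π : ℕ → S → A)
    (X : (ℕ → S) → ℝ) :
    ∑ T : Fin (H + 1) → S, trajP μ P π H (extT H T) * X (extT H T)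
      = ∑ x, μ x * trajEx P H π x X := by
  induction H generalizing μ π X with
  | zero =>
    rw [← (Equiv.funUnique (Fin 1) S).symm.sum_comp]
    refine sum_congr rfl fun x _ => ?_
    have h : extT 0 ((Equiv.funUnique (Fin 1) S).symm x) = fun _ => x := rfl
    rw [h]
    simp [trajP, trajEx]
  | succ H ih =>
    rw [← (Fin.consEquiv fun _ : Fin (H + 2) => S).sum_comp, Fintype.sum_prod_type]
    refine sum_congr rfl fun x _ => ?_
    simp only [trajEx]
    rw [← ih (P x (π 0 x)) (fun n => π (n + 1)) fun f => X (consSeq x f), mul_sum]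
    refine sum_congr rfl fun T _ => ?_
    have h : extT (H + 1) ((Fin.consEquiv fun _ : Fin (H + 2) => S) (x, T))
        = consSeq x (extT H T) := extT_cons H x T
    rw [h]
    simp only [trajP, prod_range_succ', consSeq]
    ring

lemma trajEx_mono (P : S → A → S → ℝ) (hP0 : ∀ s a s', 0 ≤ P s a s') (H : ℕ) (π : ℕ → S → A)
    (x : S) (X Y : (ℕ → S) → ℝ) (h : ∀ f, X f ≤ Y f) : trajEx P H π x X ≤ trajEx P H π x Y := by
  induction H generalizing π x X Y with
  | zero => exact h _
  | succ H ih =>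
    exact sum_le_sum fun y _ => mul_le_mul_of_nonneg_left (ih _ _ _ _ fun f => h _) (hP0 _ _ _)

lemma trajEx_const (P : S → A → S → ℝ) (hP1 : ∀ s a, ∑ s', P s a s' = 1) (H : ℕ)
    (π : ℕ → S → A) (x : S) (c : ℝ) : trajEx P H π x (fun _ => c) = c := by
  induction H generalizing π x with
  | zero => rfl
  | succ H ih => simp [trajEx, ih, ← sum_mul, hP1]

lemma trajEx_const_add (P : S → A → S → ℝ) (hP1 : ∀ s a, ∑ s', P s a s' = 1) (H : ℕ)
    (π : ℕ → S → A) (x : S) (c : ℝ) (X : (ℕ → S) → ℝ) :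
    trajEx P H π x (fun f => c + X f) = c + trajEx P H π x X := by
  induction H generalizing π x X with
  | zero => rfl
  | succ H ih =>
    simp only [trajEx]
    simp only [ih _ _ fun f => X (consSeq x f), mul_add, sum_add_distrib, ← sum_mul, hP1, one_mul]

variable [DecidableEq S]

/-- Some stationary policy simultaneously maximises the discounted probability of reaching `s`
from every state. -/
lemma exists_optimal_reach [Finite A] (P : S → A → S → ℝ) (hP0 : ∀ s a s', 0 ≤ P s a s')
    (hP1 : ∀ s a, ∑ s', P s a s' = 1) (z : S × A) (c : ℝ) (hc : 1 < c) :
    ∃ (π : S → A) (W : S → ℝ), π z.1 = z.2 ∧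
      (∀ x, c * W x = ∑ y, (if x = z.1 then 0 else P x (π x) y) * W y
        + if x = z.1 then 1 else 0) ∧
      ∀ x, x ≠ z.1 → ∀ b, ∑ y, P x b y * W y ≤ c * W x := by
  set M : (S → A) → S → S → ℝ := fun π x y => if x = z.1 then 0 else P x (π x) y with hM
  have hM0 : ∀ π x y, 0 ≤ M π x y := fun π x y => by
    simp only [hM]; split_ifs <;> simp [hP0]
  have hM1 : ∀ π x, ∑ y, M π x y ≤ 1 := fun π x => by
    simp only [hM]; split_ifs <;> simp [hP1]
  choose W hW using fun π : S → A =>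
    exists_resolvent (M π) (hM0 π) (hM1 π) (fun _ => c) (fun _ => hc)
      (fun x => if x = z.1 then 1 else 0)
  have : Nonempty (S → A) := ⟨fun _ => z.2⟩
  obtain ⟨π₀, hπ₀⟩ := Finite.exists_max fun π => ∑ x, W π x
  have hopt : ∀ x, x ≠ z.1 → ∀ b, ∑ y, P x b y * W π₀ y ≤ c * W π₀ x := by
    intro u hu b
    by_contra! hlt
    set π' := Function.update π₀ u b with hπ'
    have hsup : ∀ x, 0 ≤ W π' x - W π₀ x := by
      refine nonneg_of_superharmonic (M π') (hM0 π') (hM1 π') (fun _ => c) (fun _ => hc) _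
        fun x => Or.inr ?_
      simp only [mul_sub, sum_sub_distrib, hW π' x]
      have : c * W π₀ x ≤ ∑ y, M π' x y * W π₀ y + if x = z.1 then 1 else 0 := by
        by_cases hx : x = u
        · subst hx
          simp only [hM, hu, if_false, hπ', Function.update_self, add_zero]
          exact hlt.le
        · rw [hW π₀ x]
          simp [hM, hπ', Function.update_of_ne hx]
      linarith
    have hu' : W π₀ u < W π' u := by
      have h1 := hW π' u
      simp only [hM, hu, if_false, hπ', Function.update_self, add_zero] at h1
      have h2 : ∑ y, P u b y * W π₀ y ≤ ∑ y, P u b y * W π' y :=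
        sum_le_sum fun y _ => mul_le_mul_of_nonneg_left (by linarith [hsup y]) (hP0 _ _ _)
      have h3 : c * W π₀ u < c * W π' u := by rw [h1]; linarith
      exact lt_of_mul_lt_mul_left h3 (by linarith)
    have : ∑ x, W π₀ x < ∑ x, W π' x :=
      sum_lt_sum (fun x _ => by linarith [hsup x]) ⟨u, mem_univ u, hu'⟩
    exact absurd (hπ₀ π') (not_le.mpr this)
  refine ⟨Function.update π₀ z.1 z.2, W π₀, Function.update_self .., fun x => ?_, hopt⟩
  rw [hW π₀ x]
  by_cases hx : x = z.1
  · simp [hM, hx]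
  · simp [hM, hx]

variable [DecidableEq A]

/-- A superharmonic function bounds the probability of reaching `z`. -/
lemma trajEx_reach_le (P : S → A → S → ℝ) (hP0 : ∀ s a s', 0 ≤ P s a s')
    (hP1 : ∀ s a, ∑ s', P s a s' = 1) (z : S × A) (c : ℝ) (hc : 1 ≤ c) (W : S → ℝ)
    (hW0 : ∀ x, 0 ≤ W x) (hWz : c * W z.1 = 1)
    (hW : ∀ x, x ≠ z.1 → ∀ b, ∑ y, P x b y * W y ≤ c * W x) (H : ℕ) (π : ℕ → S → A) (x : S) :
    trajEx P H π x (fun f => if 1 ≤ nVisits π H z f then 1 else 0) ≤ c ^ H * W x := by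
  induction H generalizing π x with
  | zero => simpa [trajEx, nVisits] using hW0 x
  | succ H ih =>
    by_cases hx : x = z.1
    · calc _ ≤ trajEx P (H + 1) π x (fun _ => 1) :=
            trajEx_mono P hP0 _ _ _ _ _ fun f => by split_ifs <;> simp
        _ = 1 := trajEx_const P hP1 _ _ _ _
        _ ≤ c ^ H := one_le_pow₀ hc
        _ = c ^ (H + 1) * W x := by rw [hx, pow_succ, mul_assoc, hWz, mul_one]
    · have hz : (x, π 0 x) ≠ z := fun h => hx (by rw [← h])
      simp only [trajEx, nVisits_consSeq, hz, if_false, zero_add]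
      calc _ ≤ ∑ y, P x (π 0 x) y * (c ^ H * W y) :=
            sum_le_sum fun y _ => mul_le_mul_of_nonneg_left (ih _ y) (hP0 _ _ _)
        _ = c ^ H * ∑ y, P x (π 0 x) y * W y := by
            rw [mul_sum]; exact sum_congr rfl fun y _ => by ring
        _ ≤ c ^ H * (c * W x) := mul_le_mul_of_nonneg_left (hW x hx _) (by positivity)
        _ = _ := by ring

/-- A superharmonic function bounds the expected number of visits to `z`. -/
lemma trajEx_visits_le (P : S → A → S → ℝ) (hP0 : ∀ s a s', 0 ≤ P s a s')
    (hP1 : ∀ s a, ∑ s', P s a s' = 1) (z : S × A) (c : ℝ) (hc : 1 ≤ c) (G : S → ℝ)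
    (hG0 : ∀ x, 0 ≤ G x)
    (hG : ∀ x b, (if (x, b) = z then 1 else 0) + ∑ y, P x b y * G y ≤ c * G x)
    (H : ℕ) (π : ℕ → S → A) (x : S) :
    trajEx P H π x (fun f => (nVisits π H z f : ℝ)) ≤ c ^ H * G x := by
  induction H generalizing π x with
  | zero => simpa [trajEx, nVisits] using hG0 x
  | succ H ih =>
    simp only [trajEx, nVisits_consSeq]
    push_cast
    simp only [trajEx_const_add P hP1, mul_add, sum_add_distrib, ← sum_mul, hP1, one_mul]
    have h1 : (1 : ℝ) ≤ c ^ H := one_le_pow₀ hc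
    calc _ ≤ c ^ H * (if (x, π 0 x) = z then 1 else 0) + ∑ y, P x (π 0 x) y * (c ^ H * G y) := by
          refine add_le_add ?_
            (sum_le_sum fun y _ => mul_le_mul_of_nonneg_left (ih _ y) (hP0 _ _ _))
          split_ifs <;> linarith
      _ = c ^ H * ((if (x, π 0 x) = z then 1 else 0) + ∑ y, P x (π 0 x) y * G y) := by
          rw [mul_add, mul_sum univ _ (c ^ H)]
          congr 1
          exact sum_congr rfl fun y _ => by ring
      _ ≤ c ^ H * (c * G x) := mul_le_mul_of_nonneg_left (hG x _) (by positivity)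
      _ = _ := by ring

lemma trajEx_stationary_eq_visitTail (P : S → A → S → ℝ) (hP1 : ∀ s a, ∑ s', P s a s' = 1)
    (z : S × A) (π : S → A) (hπ : π z.1 = z.2) (H k : ℕ) (x : S) :
    trajEx P H (fun _ => π) x (fun f => if k ≤ nVisits (fun _ => π) H z f then 1 else 0)
      = visitTail (fun x y => P x (π x) y) z.1 H k x := by
  induction H generalizing k x with
  | zero => cases k <;> simp [trajEx, nVisits, visitTail]
  | succ H ih =>
    cases k with
    | zero => simpa [visitTail] using trajEx_const P hP1 (H + 1) (fun _ => π) x 1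
    | succ k =>
      have hz : (x, π x) = z ↔ x = z.1 :=
        ⟨fun h => by rw [← h], fun h => by rw [h, hπ]⟩
      simp only [trajEx, visitTail, nVisits_consSeq, hz]
      refine sum_congr rfl fun y _ => ?_
      rw [← ih]
      congr 1
      by_cases hx : x = z.1 <;> simp [hx, add_comm 1]

/-- The discounted Green function of an optimal reaching policy is superharmonic for every
action. -/
lemma exists_optimal_visits (P : S → A → S → ℝ) (hP0 : ∀ s a s', 0 ≤ P s a s')
    (hP1 : ∀ s a, ∑ s', P s a s' = 1) (z : S × A) (c : ℝ) (hc : 1 < c) (π : S → A)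
    (hπ : π z.1 = z.2) (W : S → ℝ)
    (hW : ∀ x, c * W x = ∑ y, (if x = z.1 then 0 else P x (π x) y) * W y
        + if x = z.1 then 1 else 0)
    (hWopt : ∀ x, x ≠ z.1 → ∀ b, ∑ y, P x b y * W y ≤ c * W x) :
    ∃ G : S → ℝ,
      (∀ x, c * G x = ∑ y, P x (π x) y * G y + if x = z.1 then 1 else 0) ∧
      (∀ x, 0 ≤ G x) ∧ (∀ x, G x ≤ G z.1) ∧
      ∀ x b, (if (x, b) = z then 1 else 0) + ∑ y, P x b y * G y ≤ c * G x := by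
  set K : S → S → ℝ := fun x y => P x (π x) y with hK
  have hK1 : ∀ x, ∑ y, K x y ≤ 1 := fun x => (hP1 _ _).le
  have hf : ∀ x, (0 : ℝ) ≤ if x = z.1 then 1 else 0 := fun x => by split_ifs <;> simp
  obtain ⟨G, hG⟩ := exists_resolvent K (fun _ _ => hP0 _ _ _) hK1 (fun _ => c) (fun _ => hc)
    (fun x => if x = z.1 then 1 else 0)
  have hG0 := resolvent_nonneg K (fun _ _ => hP0 _ _ _) hK1 (fun _ => c) (fun _ => hc) _ hf G hG
  have hWK : ∀ x, x ≠ z.1 → c * W x = ∑ y, K x y * W y := fun x hx => by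
    have := hW x
    simpa only [hx, if_false, add_zero] using this
  have hGK : ∀ x, x ≠ z.1 → c * G x = ∑ y, K x y * G y := fun x hx => by
    have := hG x
    simpa only [hx, if_false, add_zero] using this
  have hWz : c * W z.1 = 1 := by simpa using hW z.1
  set g := c * G z.1 with hg
  have hg0 : 0 ≤ g := mul_nonneg (by linarith) (hG0 _)
  have hz : G z.1 = g * W z.1 := by rw [hg]; linear_combination -G z.1 * hWz
  have hGW : ∀ x, G x = g * W x := fun x => by
    refine le_antisymm ?_ ?_
    · have := nonneg_of_superharmonic K (fun _ _ => hP0 _ _ _) hK1 (fun _ => c) (fun _ => hc)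
        (fun x => g * W x - G x) (fun x => by
          by_cases hx : x = z.1
          · left; rw [hx, ← hz, sub_self]
          · right
            simp only [mul_sub, sum_sub_distrib, mul_left_comm _ g, ← mul_sum, hWK x hx, hGK x hx]
            exact le_rfl) x
      linarith
    · have := nonneg_of_superharmonic K (fun _ _ => hP0 _ _ _) hK1 (fun _ => c) (fun _ => hc)
        (fun x => G x - g * W x) (fun x => by
          by_cases hx : x = z.1
          · left; rw [hx, ← hz, sub_self]
          · right
            simp only [mul_sub, sum_sub_distrib, mul_left_comm _ g, ← mul_sum, hWK x hx, hGK x hx]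
            exact le_rfl) x
      linarith
  have hmax : ∀ x, G x ≤ G z.1 := fun x => by
    have := nonneg_of_superharmonic K (fun _ _ => hP0 _ _ _) hK1 (fun _ => c) (fun _ => hc)
        (fun x => G z.1 - G x) (fun x => by
          by_cases hx : x = z.1
          · left; rw [hx, sub_self]
          · right
            simp only [mul_sub, sum_sub_distrib, ← sum_mul, hGK x hx]
            nlinarith [hK1 x, hG0 z.1]) x
    linarith
  refine ⟨G, hG, hG0, hmax, fun x b => ?_⟩
  by_cases hx : x = z.1
  · by_cases hb : b = z.2
    · have h := hG x
      simp only [hx, if_true, hK, hπ] at h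
      simp only [if_true, hx, hb]
      linarith
    · have : (x, b) ≠ z := fun h => hb (by rw [← h])
      simp only [this, if_false, zero_add]
      calc _ ≤ ∑ y, P x b y * G z.1 :=
            sum_le_sum fun y _ => mul_le_mul_of_nonneg_left (hmax y) (hP0 _ _ _)
        _ = G x := by rw [← sum_mul, hP1, one_mul, hx]
        _ ≤ c * G x := by nlinarith [hG0 x]
  · have : (x, b) ≠ z := fun h => hx (by rw [← h])
    simp only [this, if_false, zero_add, hGW, mul_left_comm _ g, ← mul_sum]
    exact mul_le_mul_of_nonneg_left (hWopt x hx b) hg0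

end Trajectory

section Quantile

variable {S A : Type}

lemma trajP_nonneg (μ : S → ℝ) (P : S → A → S → ℝ) (hμ0 : ∀ s, 0 ≤ μ s)
    (hP0 : ∀ s a s', 0 ≤ P s a s') (π : ℕ → S → A) (H : ℕ) (f : ℕ → S) :
    0 ≤ trajP μ P π H f :=
  mul_nonneg (hμ0 _) (prod_nonneg fun _ _ => hP0 _ _ _)

variable [Fintype S]

lemma sum_trajP (μ : S → ℝ) (P : S → A → S → ℝ) (hμ1 : ∑ s, μ s = 1)
    (hP1 : ∀ s a, ∑ s', P s a s' = 1) (π : ℕ → S → A) (H : ℕ) :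
    ∑ T : Fin (H + 1) → S, trajP μ P π H (extT H T) = 1 := by
  have := sum_trajP_mul P H μ π fun _ => 1
  simpa [trajEx_const P hP1, hμ1] using this

lemma le_prob_of_le_quantNS (μ : S → ℝ) (P : S → A → S → ℝ) (hμ0 : ∀ s, 0 ≤ μ s)
    (hμ1 : ∑ s, μ s = 1) (hP0 : ∀ s a s', 0 ≤ P s a s') (hP1 : ∀ s a, ∑ s', P s a s' = 1)
    (π : ℕ → S → A) (H : ℕ) (N : (ℕ → S) → ℕ) (d : ℝ) (hd : d ≤ 1) (m : ℕ)
    (hm : (m : ℝ) ≤ quantNS μ P π H (fun f => (N f : ℝ)) d) :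
    d ≤ ∑ T : Fin (H + 1) → S, trajP μ P π H (extT H T) * if m ≤ N (extT H T) then 1 else 0 := by
  by_contra! hlt
  have hsup : quantNS μ P π H (fun f => (N f : ℝ)) d ≤ (m : ℝ) - 1 := by
    refine csSup_le ⟨0, ?_⟩ fun b hb => ?_
    · simpa [sum_trajP μ P hμ1 hP1] using hd
    · by_contra! hbm
      refine absurd (le_trans hb (sum_le_sum fun T _ => ?_)) (not_le.mpr hlt)
      have h0 := trajP_nonneg μ P hμ0 hP0 π H (extT H T)
      by_cases h : b ≤ (N (extT H T) : ℝ)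
      · have : m ≤ N (extT H T) := by
          have : (m : ℝ) < N (extT H T) + 1 := by linarith
          exact_mod_cast Nat.lt_succ_iff.mp (by exact_mod_cast this)
        simp [h, this]
      · rw [if_neg h]
        split_ifs <;> simp [h0]
  linarith

end Quantile

section Joint

lemma sum_pi_prod_indicator {ι Ω : Type*} [Fintype ι] [DecidableEq ι] [Fintype Ω]
    (p : ι → Ω → ℝ) (i₀ : ι) (hp : ∀ i, ∑ t, p i t = 1) (φ : Ω → Prop) [DecidablePred φ] :
    ∑ ω : ι → Ω, (if φ (ω i₀) then ∏ i, p i (ω i) else 0) = ∑ t, if φ t then p i₀ t else 0 := by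
  have h1 : ∀ ω : ι → Ω, (if φ (ω i₀) then ∏ i, p i (ω i) else 0)
      = ∏ i, (if i = i₀ then (if φ (ω i) then 1 else 0) else 1) * p i (ω i) := fun ω => by
    rw [prod_mul_distrib, prod_ite_eq' univ i₀ fun i => if φ (ω i) then (1 : ℝ) else 0]
    simp
  simp only [h1]
  rw [← Fintype.piFinset_univ, ← prod_univ_sum (fun _ => univ)
    fun i t => (if i = i₀ then (if φ t then 1 else 0) else 1) * p i t]
  rw [prod_eq_single i₀ (fun i _ hi => by simp [hi, hp]) (by simp)]
  simp

variable {S A : Type}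

lemma extT_snoc_of_le (H : ℕ) (T : Fin (H + 1) → S) (y : S) (n : ℕ) (hn : n ≤ H) :
    extT (H + 1) (Fin.snoc T y : Fin (H + 2) → S) n = extT H T n := by
  have : (⟨min n (H + 1), by omega⟩ : Fin (H + 2)) = Fin.castSucc ⟨min n H, by omega⟩ := by
    ext; simp; omega
  simp only [extT, this, Fin.snoc_castSucc]

lemma extT_snoc_last (H : ℕ) (T : Fin (H + 1) → S) (y : S) :
    extT (H + 1) (Fin.snoc T y : Fin (H + 2) → S) (H + 1) = y := by
  have : (⟨min (H + 1) (H + 1), by omega⟩ : Fin (H + 2)) = Fin.last (H + 1) := by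
    ext; simp
  simp only [extT, this, Fin.snoc_last]

variable [DecidableEq S] [DecidableEq A]

lemma swVisited_congr (z : S × A) (π₁ π₂ : S → A) (f g : ℕ → S) (n : ℕ)
    (h : ∀ i < n, f i = g i) : swVisited z π₁ π₂ f n = swVisited z π₁ π₂ g n := by
  induction n with
  | zero => rfl
  | succ n ih =>
    simp only [swVisited, ih fun i hi => h i (by omega), h n (by omega)]

lemma swAct_congr (z : S × A) (π₁ π₂ : S → A) (f g : ℕ → S) (n : ℕ)
    (h : ∀ i ≤ n, f i = g i) : swAct z π₁ π₂ f n = swAct z π₁ π₂ g n := by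
  simp only [swAct, swVisited_congr z π₁ π₂ f g n fun i hi => h i hi.le, h n le_rfl]

lemma swProb_nonneg (μ : S → ℝ) (P : S → A → S → ℝ) (hμ0 : ∀ s, 0 ≤ μ s)
    (hP0 : ∀ s a s', 0 ≤ P s a s') (z : S × A) (π₁ π₂ : S → A) (H : ℕ) (f : ℕ → S) :
    0 ≤ swProb μ P z π₁ π₂ H f :=
  mul_nonneg (hμ0 _) (prod_nonneg fun _ _ => hP0 _ _ _)

lemma swProb_self (μ : S → ℝ) (P : S → A → S → ℝ) (z : S × A) (π : S → A) (H : ℕ)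
    (f : ℕ → S) : swProb μ P z π π H f = trajP μ P (fun _ => π) H f := by
  simp [swProb, trajP, swAct]

lemma swVisits_self (z z' : S × A) (π : S → A) (H : ℕ) (f : ℕ → S) :
    swVisits z π π H z' f = nVisits (fun _ => π) H z' f := by
  simp [swVisits, nVisits, swAct]

variable [Fintype S]

lemma sum_swProb (μ : S → ℝ) (P : S → A → S → ℝ) (hμ1 : ∑ s, μ s = 1)
    (hP1 : ∀ s a, ∑ s', P s a s' = 1) (z : S × A) (π₁ π₂ : S → A) (H : ℕ) :
    ∑ T : Fin (H + 1) → S, swProb μ P z π₁ π₂ H (extT H T) = 1 := by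
  induction H with
  | zero =>
    rw [← (Equiv.funUnique (Fin 1) S).symm.sum_comp, ← hμ1]
    refine sum_congr rfl fun x _ => ?_
    have h : extT 0 ((Equiv.funUnique (Fin 1) S).symm x) = fun _ => x := rfl
    rw [h]
    simp [swProb]
  | succ H ih =>
    rw [← (Fin.snocEquiv fun _ : Fin (H + 2) => S).sum_comp, Fintype.sum_prod_type_right, ← ih]
    refine sum_congr rfl fun T _ => ?_
    have h : ∀ y, swProb μ P z π₁ π₂ (H + 1)
        (extT (H + 1) ((Fin.snocEquiv fun _ : Fin (H + 2) => S) (y, T)))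
        = swProb μ P z π₁ π₂ H (extT H T)
          * P (extT H T H) (swAct z π₁ π₂ (extT H T) H) y := fun y => by
      set g := extT (H + 1) ((Fin.snocEquiv fun _ : Fin (H + 2) => S) (y, T)) with hg
      have hle : ∀ n ≤ H, g n = extT H T n := fun n hn => extT_snoc_of_le H T y n hn
      have hlast : g (H + 1) = y := extT_snoc_last H T y
      have hact : ∀ n ≤ H, swAct z π₁ π₂ g n = swAct z π₁ π₂ (extT H T) n := fun n hn =>
        swAct_congr _ _ _ _ _ _ fun i hi => hle i (hi.trans hn)
      simp only [swProb]
      rw [prod_range_succ, hlast, hle H le_rfl, hact H le_rfl, hle 0 (Nat.zero_le _), mul_assoc]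
      congr 2
      refine prod_congr rfl fun n hn => ?_
      have hn' := mem_range.mp hn
      rw [hle n hn'.le, hle (n + 1) hn', hact n hn'.le]
    simp only [h, ← mul_sum, hP1, mul_one]

variable [Fintype A]

/-- The visits under a single stationary policy bound the quantile of the combined collection. -/
lemma le_Qst (μ : S → ℝ) (P : S → A → S → ℝ) (hμ0 : ∀ s, 0 ≤ μ s) (hμ1 : ∑ s, μ s = 1)
    (hP0 : ∀ s a s', 0 ≤ P s a s') (hP1 : ∀ s a, ∑ s', P s a s' = 1) (H : ℕ) (z : S × A)
    (d : ℝ) (hd : 0 < d) (π : S → A) (x : ℝ) (k : ℕ) (hx : x ≤ k)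
    (h : d ≤ ∑ T : Fin (H + 1) → S, trajP μ P (fun _ => π) H (extT H T) *
      if k ≤ nVisits (fun _ => π) H z (extT H T) then 1 else 0) :
    x ≤ Qst μ P H z d := by
  refine le_csSup ?_ ?_
  · refine ⟨∑ ω, (totalVisits H z ω : ℝ), fun b hb => ?_⟩
    by_contra! hlt
    rw [Set.mem_ofPred_eq] at hb
    refine absurd hb (not_le.mpr ?_)
    rw [sum_eq_zero fun ω _ => ?_]
    · exact hd
    · rw [if_neg (not_le.mpr (lt_of_le_of_lt ?_ hlt))]
      exact single_le_sum (f := fun ω => (totalVisits H z ω : ℝ))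
        (fun _ _ => Nat.cast_nonneg _) (mem_univ ω)
  · refine le_trans h ?_
    have hind := sum_pi_prod_indicator
      (fun (i : (S × A) × (S → A) × (S → A)) (T : Fin (H + 1) → S) =>
        swProb μ P i.1 i.2.1 i.2.2 H (extT H T)) (z, π, π)
      (fun i => sum_swProb μ P hμ1 hP1 _ _ _ H)
      (fun T => k ≤ nVisits (fun _ => π) H z (extT H T))
    simp only [swProb_self] at hind
    simp only [mul_ite, mul_one, mul_zero]
    rw [← hind]
    refine sum_le_sum fun ω _ => ?_
    have h0 : 0 ≤ jointProb μ P H ω := prod_nonneg fun _ _ => swProb_nonneg μ P hμ0 hP0 _ _ _ _ _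
    by_cases hk : k ≤ nVisits (fun _ => π) H z (extT H (ω (z, π, π)))
    · have h1 : nVisits (fun _ => π) H z (extT H (ω (z, π, π))) ≤ totalVisits H z ω := by
        rw [← swVisits_self z z]
        exact single_le_sum (f := fun i : (S × A) × (S → A) × (S → A) =>
          swVisits i.1 i.2.1 i.2.2 H z (extT H (ω i))) (fun _ _ => Nat.zero_le _)
          (mem_univ (z, π, π))
      have h2 : x ≤ (totalVisits H z ω : ℝ) := hx.trans (by exact_mod_cast hk.trans h1)
      rw [if_pos hk, if_pos h2]
      exact le_rfl
    · rw [if_neg hk]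
      split_ifs
      · exact h0
      · exact le_rfl

end Joint

/-- If `s` carries at least twice as many expected visits as `k`, or `k ≤ 1`, then `k` visits occur
with probability at least one half. -/
lemma half_le_visitTail {S : Type} [Fintype S] [DecidableEq S] (K : S → S → ℝ)
    (hK0 : ∀ x y, 0 ≤ K x y) (hK1 : ∀ x, ∑ y, K x y = 1) (s : S) (T : ℕ) (hT : 1 ≤ T) (k : ℕ)
    (h : k ≤ 1 ∨ 2 * (k : ℝ) ≤ partialGreen K (fun x => if x = s then 1 else 0) T s) :
    1 / 2 ≤ visitTail K s T k s := by
  obtain ⟨T, rfl⟩ := Nat.exists_eq_add_of_le' hT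
  rcases Nat.lt_or_ge 1 k with hk | hk
  · have h2 := h.resolve_left (by omega)
    have h1 := partialGreen_le_add_visitTail K hK0 hK1 s (T + 1) (T + 1) le_rfl k s
    have h3 : (1 : ℝ) < k := by exact_mod_cast hk
    by_contra! hlt
    nlinarith
  · interval_cases k
    · norm_num [visitTail]
    · norm_num [visitTail, hK1]

section Stationary

variable {S A : Type} [Fintype S] [DecidableEq S]

/-- The probability that the chain with kernel `K` started at `x` reaches `s` within its first `t`
steps. -/
def reachProb (K : S → S → ℝ) (s : S) (t : ℕ) (x : S) : ℝ :=
  partialGreen (fun x y => if x = s then 0 else K x y) (fun x => if x = s then 1 else 0) t x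

/-- The expected number of visits to `s` within the first `t` steps of the chain with kernel `K`
started at `s`. -/
def expVisits (K : S → S → ℝ) (s : S) (t : ℕ) : ℝ :=
  partialGreen K (fun x => if x = s then 1 else 0) t s

variable [DecidableEq A]

/-- A stationary policy which, in half of the horizon, reaches `z` from `μ` and returns to `z`
almost as well as any non-stationary policy does in the whole horizon. -/
lemma exists_stationary_reach_and_visits [Finite A] (μ : S → ℝ) (P : S → A → S → ℝ)
    (hμ0 : ∀ s, 0 ≤ μ s) (hμ1 : ∑ s, μ s = 1) (hP0 : ∀ s a s', 0 ≤ P s a s')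
    (hP1 : ∀ s a, ∑ s', P s a s' = 1) (H : ℕ) (hHpos : 0 < H) (z : S × A) (ε : ℝ) (m : ℕ)
    (hm : 0 < m) (r : ℝ) (hr1 : 1 ≤ r) (T : ℕ)
    (hT : 2 * r ^ Fintype.card S * (1 + 1 / (H : ℝ)) ^ T ≤ (1 + r * (1 / (H : ℝ))) ^ T)
    (πn : ℕ → S → A)
    (hprob : ε ≤ ∑ T : Fin (H + 1) → S, trajP μ P πn H (extT H T) *
      if m ≤ nVisits πn H z (extT H T) then 1 else 0) :
    ∃ π : S → A, π z.1 = z.2 ∧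
      ε ≤ 6 * r ^ Fintype.card S * ∑ x, μ x * reachProb (fun x y => P x (π x) y) z.1 T x ∧
      ε * m ≤ 6 * r ^ Fintype.card S * expVisits (fun x y => P x (π x) y) z.1 T := by
  have hHR : (0 : ℝ) < H := by exact_mod_cast hHpos
  set c : ℝ := 1 + 1 / (H : ℝ) with hc
  have hc1 : 1 < c := by
    have : 0 < 1 / (H : ℝ) := by positivity
    linarith
  have hcH : c ^ H ≤ 3 := by
    calc c ^ H ≤ Real.exp (1 / (H : ℝ)) ^ H := by
          gcongr; linarith [Real.add_one_le_exp (1 / (H : ℝ))]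
      _ = Real.exp 1 := by rw [← Real.exp_nat_mul, mul_one_div_cancel hHR.ne']
      _ ≤ 3 := by linarith [Real.exp_one_lt_d9]
  obtain ⟨π, W, hπ, hW, hWopt⟩ := exists_optimal_reach P hP0 hP1 z c hc1
  obtain ⟨G, hG, hG0, hGmax, hGopt⟩ := exists_optimal_visits P hP0 hP1 z c hc1 π hπ W hW hWopt
  have hK1 : ∀ x, ∑ y, P x (π x) y ≤ 1 := fun x => (hP1 _ _).le
  have hM0 : ∀ x y, 0 ≤ if x = z.1 then 0 else P x (π x) y := fun x y => by
    split_ifs <;> simp [hP0]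
  have hM1 : ∀ x, ∑ y, (if x = z.1 then 0 else P x (π x) y) ≤ 1 := fun x => by
    split_ifs <;> simp [hP1]
  have hf : ∀ x, (0 : ℝ) ≤ if x = z.1 then 1 else 0 := fun x => by split_ifs <;> simp
  have hW0 := resolvent_nonneg _ hM0 hM1 (fun _ => c) (fun _ => hc1) _ hf W hW
  have hWz : c * W z.1 = 1 := by simpa using hW z.1
  have hWle := half_resolvent_le_partialGreen _ hM0 hM1 (1 / (H : ℝ)) (by positivity) r hr1 _ hf W
    hW T hT
  have hGle := half_resolvent_le_partialGreen _ (fun _ _ => hP0 _ _ _) hK1 (1 / (H : ℝ))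
    (by positivity) r hr1 _ hf G hG T hT z.1
  change G z.1 ≤ _ * expVisits (fun x y => P x (π x) y) z.1 T at hGle
  change ∀ x, W x ≤ _ * reachProb (fun x y => P x (π x) y) z.1 T x at hWle
  refine ⟨π, hπ, ?_, ?_⟩
  · calc ε ≤ ∑ T : Fin (H + 1) → S, trajP μ P πn H (extT H T) *
          (if 1 ≤ nVisits πn H z (extT H T) then 1 else 0) := by
          refine hprob.trans (sum_le_sum fun T _ =>
            mul_le_mul_of_nonneg_left ?_ (trajP_nonneg μ P hμ0 hP0 _ _ _))
          split_ifs <;> first | omega | norm_num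
      _ = ∑ x, μ x * trajEx P H πn x (fun f => if 1 ≤ nVisits πn H z f then 1 else 0) :=
          sum_trajP_mul P H μ πn fun f => if 1 ≤ nVisits πn H z f then 1 else 0
      _ ≤ ∑ x, μ x * (6 * r ^ Fintype.card S * reachProb (fun x y => P x (π x) y) z.1 T x) := by
          refine sum_le_sum fun x _ => mul_le_mul_of_nonneg_left ?_ (hμ0 x)
          have h1 := trajEx_reach_le P hP0 hP1 z c hc1.le W hW0 hWz hWopt H πn x
          have h2 := mul_le_mul_of_nonneg_right hcH (hW0 x)
          linarith [hWle x]
      _ = _ := by rw [mul_sum]; exact sum_congr rfl fun x _ => by ring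
  · calc ε * m ≤ ∑ T : Fin (H + 1) → S, trajP μ P πn H (extT H T) *
          (nVisits πn H z (extT H T) : ℝ) := by
          refine (mul_le_mul_of_nonneg_right hprob (by positivity)).trans ?_
          rw [sum_mul]
          refine sum_le_sum fun T _ => ?_
          rw [mul_assoc]
          refine mul_le_mul_of_nonneg_left ?_ (trajP_nonneg μ P hμ0 hP0 _ _ _)
          split_ifs with h
          · rw [one_mul]; exact_mod_cast h
          · simp
      _ = ∑ x, μ x * trajEx P H πn x (fun f => (nVisits πn H z f : ℝ)) :=
          sum_trajP_mul P H μ πn fun f => (nVisits πn H z f : ℝ)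
      _ ≤ ∑ x, μ x * (3 * G z.1) := by
          refine sum_le_sum fun x _ => mul_le_mul_of_nonneg_left ?_ (hμ0 x)
          have h1 := trajEx_visits_le P hP0 hP1 z c hc1.le G hG0 hGopt H πn x
          have h2 := mul_le_mul_of_nonneg_right hcH (hG0 x)
          linarith [hGmax x]
      _ = 3 * G z.1 := by rw [← sum_mul, hμ1, one_mul]
      _ ≤ _ := by linarith

/-- The visit count guaranteed by reaching `z` in the first half of the horizon and returning to it
in the second half. -/
lemma le_prob_visits_of_reach (μ : S → ℝ) (P : S → A → S → ℝ)
    (hμ0 : ∀ s, 0 ≤ μ s) (hP0 : ∀ s a s', 0 ≤ P s a s')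
    (hP1 : ∀ s a, ∑ s', P s a s' = 1) (H t : ℕ) (htH : t + (t + 1) ≤ H) (z : S × A)
    (π : S → A) (hπ : π z.1 = z.2) (x : ℝ) (hx0 : 0 < x)
    (hR : 4 * x ≤ expVisits (fun x y => P x (π x) y) z.1 (t + 1)) :
    (∑ x, μ x * reachProb (fun x y => P x (π x) y) z.1 (t + 1) x) * (1 / 2) ≤
      ∑ T : Fin (H + 1) → S, trajP μ P (fun _ => π) H (extT H T) *
        if ⌈x⌉₊ ≤ nVisits (fun _ => π) H z (extT H T) then 1 else 0 := by
  set K : S → S → ℝ := fun x y => P x (π x) y with hK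
  have hK0 : ∀ x y, 0 ≤ K x y := fun _ _ => hP0 _ _ _
  have hK1 : ∀ x, ∑ y, K x y = 1 := fun _ => hP1 _ _
  have htail := half_le_visitTail K hK0 hK1 z.1 (t + 1) (by omega) ⌈x⌉₊ (by
    rcases le_or_gt x 1 with h | h
    · left; exact Nat.ceil_le.mpr (by exact_mod_cast h)
    · right
      have := Nat.ceil_lt_add_one hx0.le
      change 2 * (⌈x⌉₊ : ℝ) ≤ expVisits K z.1 (t + 1)
      linarith)
  rw [sum_trajP_mul P H μ (fun _ => π)
    fun f => if ⌈x⌉₊ ≤ nVisits (fun _ => π) H z f then 1 else 0, sum_mul]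
  simp only [trajEx_stationary_eq_visitTail P hP1 z π hπ]
  refine sum_le_sum fun s _ => ?_
  rw [mul_assoc]
  refine mul_le_mul_of_nonneg_left ?_ (hμ0 s)
  have hQ0 : 0 ≤ reachProb K z.1 (t + 1) s :=
    partialGreen_nonneg _ (fun x y => by split_ifs <;> simp [hK0]) _
      (fun x => by split_ifs <;> simp) _ _
  calc _ ≤ reachProb K z.1 (t + 1) s * visitTail K z.1 (t + 1) ⌈x⌉₊ z.1 :=
        mul_le_mul_of_nonneg_left htail hQ0
    _ ≤ visitTail K z.1 (t + (t + 1)) ⌈x⌉₊ s :=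
        partialGreen_mul_visitTail_le K hK0 z.1 hK1 _ _ _ _
    _ ≤ _ := visitTail_mono K hK0 _ _ _ htH

end Stationary


lemma horizon_numeric (n H T : ℕ) (hn : 1 ≤ n)
    (hH : 2 * Real.log (8 * ((n : ℝ) + 1) ^ (4 * (n + 1))) ≤ (H : ℝ))
    (hT : H ≤ 2 * T) (hTH : T ≤ H) :
    2 * (((n : ℝ) + 1) ^ 6) ^ n * (1 + 1 / (H : ℝ)) ^ T
      ≤ (1 + ((n : ℝ) + 1) ^ 6 * (1 / (H : ℝ))) ^ T := by
  set N : ℝ := (n : ℝ) + 1 with hN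
  have hn' : (1 : ℝ) ≤ n := by exact_mod_cast hn
  have hN2 : 2 ≤ N := by linarith
  set L : ℝ := Real.log (8 * N ^ (4 * (n + 1))) with hL
  have hLexp : Real.exp L = 8 * N ^ (4 * (n + 1)) := Real.exp_log (by positivity)
  have hLeq : L = 3 * Real.log 2 + 4 * N * Real.log N := by
    rw [hL, Real.log_mul (by norm_num) (by positivity), Real.log_pow,
      show (8 : ℝ) = 2 ^ 3 by norm_num, Real.log_pow]
    push_cast
    rw [hN]
  have hlogN : 0 ≤ Real.log N := Real.log_nonneg (by linarith)
  have hlog2 := Real.log_two_lt_d9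
  have hlog2' := Real.log_two_gt_d9
  have hLpos : 0 < L := by rw [hLeq]; positivity
  have hHpos : (0 : ℝ) < H := by linarith
  have hbig : 7 * L ≤ N ^ 6 := by
    rw [hLeq]
    rcases hn.eq_or_lt with h | h
    · have : N = 2 := by rw [hN, ← h]; norm_num
      rw [this]; linarith
    · have h3 : (2 : ℝ) ≤ n := by exact_mod_cast h
      have hN3 : 3 ≤ N := by linarith
      have hlog := Real.log_le_sub_one_of_pos (by linarith : 0 < N)
      have h1 : N * Real.log N ≤ N * (N - 1) := mul_le_mul_of_nonneg_left hlog (by linarith)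
      have h2 : 81 * N ^ 2 ≤ N ^ 6 := by
        have : (3 : ℝ) ^ 4 ≤ N ^ 4 := by gcongr
        calc 81 * N ^ 2 ≤ N ^ 4 * N ^ 2 := by gcongr; linarith
          _ = N ^ 6 := by ring
      nlinarith
  have hexp : Real.exp (3 / 2) ≤ 1 + N ^ 6 / (2 * L) := by
    have h1 : (7 : ℝ) / 2 ≤ N ^ 6 / (2 * L) := by
      rw [div_le_div_iff₀ (by norm_num) (by positivity)]; linarith
    have h2 : Real.exp (3 / 2) ≤ 9 / 2 := by
      have h3 : Real.exp (3 / 2) ^ 2 = Real.exp 1 ^ 3 := by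
        rw [← Real.exp_nat_mul, ← Real.exp_nat_mul]; norm_num
      have h4 : Real.exp 1 ^ 3 ≤ 2.7182818286 ^ 3 := by
        gcongr; exact Real.exp_one_lt_d9.le
      have h5 : (0 : ℝ) < Real.exp (3 / 2) := Real.exp_pos _
      by_contra! h6
      nlinarith
    linarith
  have hlog1 : 3 / 2 ≤ Real.log (1 + N ^ 6 / (2 * L)) :=
    (Real.le_log_iff_exp_le (by positivity)).mpr hexp
  have hbern : 1 + N ^ 6 / (2 * L) ≤ (1 + N ^ 6 * (1 / (H : ℝ))) ^ ((H : ℝ) / (2 * L)) := by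
    have := one_add_mul_self_le_rpow_one_add (s := N ^ 6 * (1 / (H : ℝ)))
      (by have : (0 : ℝ) ≤ N ^ 6 * (1 / (H : ℝ)) := by positivity
          linarith) (p := (H : ℝ) / (2 * L))
      (by rw [one_le_div (by positivity)]; exact hH)
    convert this using 2
    field_simp
  have hlog3 : Real.log (1 + N ^ 6 / (2 * L))
      ≤ (H : ℝ) / (2 * L) * Real.log (1 + N ^ 6 * (1 / (H : ℝ))) :=
    (Real.log_le_log (by positivity) hbern).trans_eq (Real.log_rpow (by positivity) _)
  have hT' : (H : ℝ) / 2 ≤ T := by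
    have : (H : ℝ) ≤ 2 * T := by exact_mod_cast hT
    linarith
  have hlogpos : 0 ≤ Real.log (1 + N ^ 6 * (1 / (H : ℝ))) := Real.log_nonneg (by
    have : (0 : ℝ) ≤ N ^ 6 * (1 / (H : ℝ)) := by positivity
    linarith)
  have hmain : L * (3 / 2) ≤ T * Real.log (1 + N ^ 6 * (1 / (H : ℝ))) := by
    calc L * (3 / 2) ≤ L * ((H : ℝ) / (2 * L) * Real.log (1 + N ^ 6 * (1 / (H : ℝ)))) :=
          mul_le_mul_of_nonneg_left (hlog1.trans hlog3) hLpos.le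
      _ = (H : ℝ) / 2 * Real.log (1 + N ^ 6 * (1 / (H : ℝ))) := by field_simp
      _ ≤ _ := mul_le_mul_of_nonneg_right hT' hlogpos
  have hpow : Real.exp (L * (3 / 2)) ≤ (1 + N ^ 6 * (1 / (H : ℝ))) ^ T := by
    rw [← Real.exp_log (by positivity : 0 < (1 + N ^ 6 * (1 / (H : ℝ))) ^ T), Real.log_pow]
    exact Real.exp_le_exp.mpr hmain
  have hthree : (1 + 1 / (H : ℝ)) ^ T ≤ 3 := by
    calc (1 + 1 / (H : ℝ)) ^ T ≤ Real.exp (1 / (H : ℝ)) ^ T := by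
          gcongr; linarith [Real.add_one_le_exp (1 / (H : ℝ))]
      _ = Real.exp (T * (1 / (H : ℝ))) := by rw [← Real.exp_nat_mul]
      _ ≤ Real.exp 1 := Real.exp_le_exp.mpr (by
          rw [mul_one_div, div_le_one hHpos]; exact_mod_cast hTH)
      _ ≤ 3 := by linarith [Real.exp_one_lt_d9]
  have hsq : (6 * (N ^ 6) ^ n) ^ 2 ≤ Real.exp (L * (3 / 2)) ^ 2 := by
    have : Real.exp (L * (3 / 2)) ^ 2 = Real.exp L ^ 3 := by
      rw [← Real.exp_nat_mul, ← Real.exp_nat_mul]; congr 1; push_cast; ring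
    rw [this, hLexp]
    calc (6 * (N ^ 6) ^ n) ^ 2 = 36 * N ^ (12 * n) := by rw [← pow_mul]; ring
      _ ≤ 512 * N ^ (12 * n + 12) := by gcongr <;> linarith
      _ = _ := by ring
  have h6 : 6 * (N ^ 6) ^ n ≤ Real.exp (L * (3 / 2)) :=
    le_of_sq_le_sq hsq (Real.exp_pos _).le
  have hp : 0 < (N ^ 6) ^ n := by positivity
  nlinarith

lemma card_pow_le (n : ℕ) (hn : 1 ≤ n) :
    (((n : ℝ) + 1) ^ 6) ^ n ≤ 64 * (n : ℝ) ^ (12 * n) := by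
  rcases hn.eq_or_lt with h | h
  · rw [← h]; norm_num
  · have h2 : (2 : ℝ) ≤ n := by exact_mod_cast h
    calc (((n : ℝ) + 1) ^ 6) ^ n ≤ (((n : ℝ) ^ 2) ^ 6) ^ n := by gcongr; nlinarith
      _ = 1 * (n : ℝ) ^ (12 * n) := by rw [← pow_mul, ← pow_mul]; ring_nf
      _ ≤ _ := by gcongr; norm_num

theorem stmt18 {S A : Type} [Fintype S] [Fintype A] [DecidableEq S] [DecidableEq A]
    (μ : S → ℝ) (P : S → A → S → ℝ)
    (hμ0 : ∀ s, 0 ≤ μ s) (hμ1 : ∑ s, μ s = 1)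
    (hP0 : ∀ s a s', 0 ≤ P s a s') (hP1 : ∀ s a, ∑ s', P s a s' = 1)
    (H : ℕ)
    (hH : 2 * Real.log (8 * ((Fintype.card S : ℝ) + 1) ^ (4 * (Fintype.card S + 1))) ≤ (H : ℝ))
    (ε : ℝ) (hε0 : 0 < ε) (hε1 : ε ≤ 1)
    (m : S × A → ℕ)
    -- `m z` is the largest integer such that some (possibly non-stationary) policy visits `z`
    -- at least `m z` times with probability at least `ε`
    (hm1 : ∀ z : S × A, ∃ π : ℕ → S → A,
      (m z : ℝ) ≤ quantNS μ P π H (fun f => (nVisits π H z f : ℝ)) ε)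
    (hm2 : ∀ (z : S × A) (k : ℕ),
      (∃ π : ℕ → S → A, (k : ℝ) ≤ quantNS μ P π H (fun f => (nVisits π H z f : ℝ)) ε) →
      k ≤ m z) :
    ∀ z : S × A,
      (1 / (4096 * (Fintype.card S : ℝ) ^ (12 * Fintype.card S))) * ε * (m z : ℝ) ≤
        Qst μ P H z
          (ε / (1024 * ((Fintype.card S : ℝ) + 1) ^ (12 * (Fintype.card S + 1)))) := by
  intro z
  set n := Fintype.card S with hn
  have hn1 : 1 ≤ n := Fintype.card_pos_iff.mpr ⟨z.1⟩
  set d := ε / (1024 * ((n : ℝ) + 1) ^ (12 * (n + 1))) with hd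
  have hone : (1 : ℝ) ≤ ((n : ℝ) + 1) ^ (12 * (n + 1)) := one_le_pow₀ (by
    have : (0 : ℝ) ≤ n := n.cast_nonneg
    linarith)
  have hd0 : 0 < d := by positivity
  rcases Nat.eq_zero_or_pos (m z) with hmz | hmz
  · refine le_Qst μ P hμ0 hμ1 hP0 hP1 H z d hd0 (fun _ => z.2) _ 0 (by simp [hmz]) ?_
    have hd1 : d ≤ 1 := by
      rw [hd, div_le_one (by positivity)]; linarith
    simpa [sum_trajP μ P hμ1 hP1] using hd1
  obtain ⟨πn, hπn⟩ := hm1 z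
  have hprob := le_prob_of_le_quantNS μ P hμ0 hμ1 hP0 hP1 πn H (nVisits πn H z) ε hε1 (m z) hπn
  have hHpos : 0 < H := by
    have : 0 < Real.log (8 * ((n : ℝ) + 1) ^ (4 * (n + 1))) := Real.log_pos (by
      have : (1 : ℝ) ≤ ((n : ℝ) + 1) ^ (4 * (n + 1)) := one_le_pow₀ (by
        have : (0 : ℝ) ≤ n := n.cast_nonneg
        linarith)
      linarith)
    have : (0 : ℝ) < H := by linarith
    exact_mod_cast this
  obtain ⟨t, ht, htH⟩ : ∃ t, H ≤ 2 * (t + 1) ∧ t + (t + 1) ≤ H := ⟨(H - 1) / 2, by omega, by omega⟩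
  have hnum := horizon_numeric n H (t + 1) hn1 hH ht (by omega)
  set r : ℝ := ((n : ℝ) + 1) ^ 6 with hr
  have hr1 : 1 ≤ r := one_le_pow₀ (by linarith [n.cast_nonneg (α := ℝ)])
  obtain ⟨π, hπ, hreach, hvisits⟩ := exists_stationary_reach_and_visits μ P hμ0 hμ1 hP0 hP1 H hHpos
    z ε (m z) hmz r hr1 (t + 1) hnum πn hprob
  rw [← hn] at hreach hvisits
  have hrn : 0 < r ^ n := by positivity
  set R := expVisits (fun x y => P x (π x) y) z.1 (t + 1)
  set D : ℝ := (n : ℝ) ^ (12 * n) with hD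
  have hD0 : 0 < D := by
    have : (0 : ℝ) < n := by exact_mod_cast hn1
    positivity
  have hrD : r ^ n ≤ 64 * D := card_pow_le n hn1
  set x := 1 / (4096 * D) * ε * (m z : ℝ) with hx
  have hx0 : 0 < x := by positivity
  have hxD : ε * m z = 4096 * D * x := by rw [hx]; field_simp
  have hR : 4 * x ≤ R := by
    have hR0 : 0 < R := by
      by_contra! hle
      nlinarith [mul_pos hD0 hx0]
    have h1 : 4096 * D * x ≤ 384 * D * R := by
      rw [← hxD]
      nlinarith
    have h2 : D * (4 * x) ≤ D * R := by nlinarith [mul_pos hD0 hx0]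
    exact le_of_mul_le_mul_left h2 hD0
  refine le_Qst μ P hμ0 hμ1 hP0 hP1 H z d hd0 π x ⌈x⌉₊ (Nat.le_ceil x)
    (le_trans ?_ (le_prob_visits_of_reach μ P hμ0 hP0 hP1 H t htH z π hπ x hx0 hR))
  have h1 : r ^ n ≤ ((n : ℝ) + 1) ^ (12 * (n + 1)) := by
    rw [hr, ← pow_mul]
    exact pow_le_pow_right₀ (by linarith [n.cast_nonneg (α := ℝ)]) (by omega)
  have h2 : d ≤ ε / (12 * r ^ n) := by
    rw [hd]
    gcongr
    norm_num
  refine h2.trans ?_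
  rw [div_le_iff₀ (by positivity)]
  linarith
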